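/- Let g^{jk}, g^{0k}, g^{00}, V, A₀, A₁, A₂, A₃ be smooth real-valued functions on ℝ³ (j, k = 1, 2, 3), with g^{jk} symmetric and uniformly elliptic: λ|ξ|² ≤ g^{jk}(x)ξ_jξ_k ≤ Λ|ξ|² for all x, ξ ∈ ℝ³ with 0 < λ ≤ Λ, with g^{0k}, g^{00}, V bounded, and with |A_α(x)| ≤ M/|x| for α = 0, 1, 2, 3. Define, with D_j = (1/i)∂_j, P₀u = (D_j + A_j) g^{jk} (D_k + A_k)u + A₀ g^{0k}(D_k + A_k)u + (D_k + A_k)(A₀ g^{0k} u) + (g^{00}A₀² + V)u, the sesquilinear density |D_A u|² = g^{jk} (D_j + A_j)u · conj((D_k + A_k)u), and 𝒬(u,u) = 2 A₀ g^{0i} Re(u · conj((D_i + A_i)u)) + (g^{00}A₀² + V)|u|². Suppose there is 0 ≤ λ₀ < 1 such that −∫_{ℝ³} 𝒬(u,u) dx ≤ λ₀ ∫_{ℝ³} |D_A u|² dx for all u ∈ C_c^∞(ℝ³, ℂ). Then there is a constant C depending only on λ, Λ, M such that for all u ∈ C_c^∞(ℝ³, ℂ): ‖∇u‖_{L²(ℝ³)}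 ≤ C (1 − λ₀)^{−1} ‖P₀ u‖_{Ḣ⁻¹}. -/

import Mathlib

/-!
Pairing `P₀ u` with `u` and integrating by parts gives
`Re ∫ P₀u ū = ∫ |D_A u|² + ∫ 𝒬(u,u)` (`energy_identity`), so the hypothesis on `𝒬` and duality
(`pairing_le`) yield `(1 - λ₀) ∫ |D_A u|² ≤ ‖P₀u‖_{Ḣ⁻¹} ‖∇u‖`. By ellipticity (`DAsq_ge`) the left
side controls the Euclidean norm of `(D + A) u`, and it remains to bound `‖∇u‖` by that norm.

This uses the magnetic Hardy inequality `∫ |u|²/|x|² ≤ 4 ∫ |(D + A) u|²` (`magnetic_hardy`, with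
`|x|²` regularised to `|x|² + ε`). It comes from integrating the divergence of `x |u|²/(|x|² + ε)`:
since `A` is real, `∂_j |u|²` only sees the covariant derivative. As `|A| ≲ M/|x|`, the term `A u`
is then bounded in `L²` by `(D + A) u` (`integral_potential_le`), hence so is `∇u`
(`integral_grad_le`); finally a factor `‖∇u‖` is cancelled.

Hardy's inequality with `A = 0` also shows that the set whose supremum is `‖f‖_{Ḣ⁻¹}` is bounded
for continuous compactly supported `f` (`bddAbove_negSob`), so that the real-valued `sSup` is not
a junk value.
-/

open MeasureTheory

noncomputable section

/-- Euclidean space `ℝ³`. -/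
abbrev E3 := EuclideanSpace ℝ (Fin 3)

/-- The partial derivative `∂ⱼ u` of a complex-valued function on `ℝ³`. -/
def pd (j : Fin 3) (u : E3 → ℂ) : E3 → ℂ :=
  fun x => fderiv ℝ u x (EuclideanSpace.single j 1)

/-- The covariant derivative `(D_j + A_j) u` where `D_j = (1/i) ∂_j`. -/
def DA (A : Fin 3 → E3 → ℝ) (j : Fin 3) (u : E3 → ℂ) : E3 → ℂ :=
  fun x => -Complex.I * pd j u x + (A j x : ℂ) * u x

/-- The homogeneous `Ḣ¹` (Dirichlet) norm `‖∇u‖_{L²(ℝ³)}`. -/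
def gradL2 (u : E3 → ℂ) : ℝ :=
  Real.sqrt (∫ x : E3, ∑ j, ‖pd j u x‖ ^ 2)

/-- The homogeneous negative Sobolev norm
`‖f‖_{Ḣ⁻¹} = sup { |∫ f conj v| : v ∈ C_c^∞, ‖∇v‖_{L²} ≤ 1 }`. -/
def negSob (f : E3 → ℂ) : ℝ :=
  sSup {r : ℝ | ∃ v : E3 → ℂ, ContDiff ℝ (⊤ : ℕ∞) v ∧ HasCompactSupport v ∧
    gradL2 v ≤ 1 ∧ r = ‖∫ x : E3, f x * (starRingEnd ℂ) (v x)‖}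

/-- The magnetic Dirichlet density `|D_A u|² = g^{jk} (D_j+A_j)u ⬝ conj((D_k+A_k)u)`
(a real quantity, taken via the real part). -/
def DAsq (g : Fin 3 → Fin 3 → E3 → ℝ) (A : Fin 3 → E3 → ℝ) (u : E3 → ℂ) : E3 → ℝ :=
  fun x => (∑ j, ∑ k, (g j k x : ℂ) * DA A j u x * (starRingEnd ℂ) (DA A k u x)).re

/-- The sesquilinear density
`𝒬(u,u) = 2 A₀ g^{0i} Re(u conj((D_i + A_i)u)) + (g^{00}A₀² + V)|u|²`. -/
def Qform (g0 : Fin 3 → E3 → ℝ) (g00 V A0 : E3 → ℝ) (A : Fin 3 → E3 → ℝ)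
    (u : E3 → ℂ) : E3 → ℝ :=
  fun x => 2 * A0 x * (∑ i, g0 i x * (u x * (starRingEnd ℂ) (DA A i u x)).re)
    + (g00 x * (A0 x) ^ 2 + V x) * ‖u x‖ ^ 2

/-- The operator
`P₀u = (D_j + A_j) g^{jk} (D_k + A_k)u + A₀ g^{0k}(D_k + A_k)u
      + (D_k + A_k)(A₀ g^{0k} u) + (g^{00}A₀² + V)u`. -/
def P0op (g : Fin 3 → Fin 3 → E3 → ℝ) (g0 : Fin 3 → E3 → ℝ) (g00 V A0 : E3 → ℝ)
    (A : Fin 3 → E3 → ℝ) (u : E3 → ℂ) : E3 → ℂ :=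
  fun x =>
    (∑ j, DA A j (fun y => ∑ k, (g j k y : ℂ) * DA A k u y) x)
    + (A0 x : ℂ) * ∑ k, (g0 k x : ℂ) * DA A k u x
    + (∑ k, DA A k (fun y => ((A0 y * g0 k y : ℝ) : ℂ) * u y) x)
    + ((g00 x * (A0 x) ^ 2 + V x : ℝ) : ℂ) * u x

open Filter Topology ComplexConjugate

/-! ### Calculus of the partial derivatives -/

lemma pd_contDiff {u : E3 → ℂ} (hu : ContDiff ℝ (⊤ : ℕ∞) u) (j : Fin 3) :
    ContDiff ℝ (⊤ : ℕ∞) (pd j u) :=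
  (hu.fderiv_right (m := (⊤ : ℕ∞)) (by exact_mod_cast le_refl _)).clm_apply contDiff_const

lemma conj_contDiff {u : E3 → ℂ} (hu : ContDiff ℝ (⊤ : ℕ∞) u) :
    ContDiff ℝ (⊤ : ℕ∞) (fun x => conj (u x)) :=
  Complex.conjCLE.contDiff.comp hu

lemma ofReal_contDiff {a : E3 → ℝ} (ha : ContDiff ℝ (⊤ : ℕ∞) a) :
    ContDiff ℝ (⊤ : ℕ∞) (fun x => (a x : ℂ)) :=
  Complex.ofRealCLM.contDiff.comp ha

lemma DA_contDiff {A : Fin 3 → E3 → ℝ} (hA : ∀ j, ContDiff ℝ (⊤ : ℕ∞) (A j))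
    {u : E3 → ℂ} (hu : ContDiff ℝ (⊤ : ℕ∞) u) (j : Fin 3) :
    ContDiff ℝ (⊤ : ℕ∞) (DA A j u) :=
  (contDiff_const.mul (pd_contDiff hu j)).add ((ofReal_contDiff (hA j)).mul hu)

lemma diffAt {F : Type*} [NormedAddCommGroup F] [NormedSpace ℝ F] {u : E3 → F}
    (hu : ContDiff ℝ (⊤ : ℕ∞) u) (x : E3) : DifferentiableAt ℝ u x :=
  (hu.differentiable (by simp)) x

lemma pd_mul {f h : E3 → ℂ} {x : E3} (hf : DifferentiableAt ℝ f x)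
    (hh : DifferentiableAt ℝ h x) (j : Fin 3) :
    pd j (fun y => f y * h y) x = pd j f x * h x + f x * pd j h x := by
  unfold pd
  rw [fderiv_fun_mul hf hh]
  simp
  ring

lemma pd_add {f h : E3 → ℂ} {x : E3} (hf : DifferentiableAt ℝ f x)
    (hh : DifferentiableAt ℝ h x) (j : Fin 3) :
    pd j (fun y => f y + h y) x = pd j f x + pd j h x := by
  unfold pd
  rw [fderiv_fun_add hf hh]
  simp

lemma pd_conj {u : E3 → ℂ} {x : E3} (hu : DifferentiableAt ℝ u x) (j : Fin 3) :
    pd j (fun y => conj (u y)) x = conj (pd j u x) := by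
  unfold pd
  have h := (Complex.conjCLE.toContinuousLinearMap.hasFDerivAt.comp x hu.hasFDerivAt).fderiv
  have h2 : (fun y => conj (u y)) = (Complex.conjCLE.toContinuousLinearMap ∘ u) := by
    ext y; simp
  rw [h2, h]
  simp

lemma pd_ofReal {a : E3 → ℝ} {a' : E3 →L[ℝ] ℝ} {x : E3} (ha : HasFDerivAt a a' x) (j : Fin 3) :
    pd j (fun y => (a y : ℂ)) x = (a' (EuclideanSpace.single j 1) : ℂ) := by
  unfold pd
  have h := (Complex.ofRealCLM.hasFDerivAt.comp x ha).fderiv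
  have h2 : (fun y => (a y : ℂ)) = (Complex.ofRealCLM ∘ a) := by
    ext y; simp
  rw [h2, h]
  simp

lemma pd_eq_zero {u : E3 → ℂ} {x : E3} (hx : x ∉ tsupport u) (j : Fin 3) : pd j u x = 0 := by
  have : fderiv ℝ u x = 0 := by
    by_contra h
    exact hx (support_fderiv_subset ℝ (Function.mem_support.2 h))
  simp [pd, this]

lemma DA_eq_zero {A : Fin 3 → E3 → ℝ} {u : E3 → ℂ} {x : E3} (hx : x ∉ tsupport u) (j : Fin 3) :
    DA A j u x = 0 := by
  simp [DA, pd_eq_zero hx, image_eq_zero_of_notMem_tsupport hx]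

lemma integrable_of_vanish {F : Type*} [NormedAddCommGroup F] {u : E3 → ℂ}
    (hc : HasCompactSupport u) {f : E3 → F} (hf : Continuous f)
    (h : ∀ x, x ∉ tsupport u → f x = 0) : Integrable f :=
  hf.integrable_of_hasCompactSupport (HasCompactSupport.intro hc h)

lemma integral_pd_eq_zero {w : E3 → ℂ} (hw : ContDiff ℝ (⊤ : ℕ∞) w) (hc : HasCompactSupport w)
    (j : Fin 3) : ∫ x, pd j w x = 0 := by
  have h := integral_mul_fderiv_eq_neg_fderiv_mul_of_integrable (μ := (volume : Measure E3))
    (f := fun _ => (1 : ℂ)) (g := w) (v := EuclideanSpace.single j (1 : ℝ))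
    (by simp)
    (by
      simp only [one_mul]
      exact integrable_of_vanish hc (pd_contDiff hw j).continuous fun x hx => pd_eq_zero hx j)
    (by simpa using integrable_of_vanish hc hw.continuous
          fun x hx => image_eq_zero_of_notMem_tsupport hx)
    (by simp) (fun x _ => diffAt hw x)
  simpa [pd] using h

lemma integrable_pd {w : E3 → ℂ} (hw : ContDiff ℝ (⊤ : ℕ∞) w) (hc : HasCompactSupport w)
    (j : Fin 3) : Integrable (pd j w) :=
  integrable_of_vanish hc (pd_contDiff hw j).continuous fun _ hx => pd_eq_zero hx j

/-! ### The magnetic Hardy inequality -/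

/-- The component `x_j / (|x|² + ε)` of the regularised Hardy vector field. -/
def hardyField (ε : ℝ) (j : Fin 3) (x : E3) : ℝ := x j * (‖x‖ ^ 2 + ε)⁻¹

lemma hardyField_contDiff {ε : ℝ} (hε : 0 < ε) (j : Fin 3) :
    ContDiff ℝ (⊤ : ℕ∞) (hardyField ε j) := by
  refine ContDiff.mul ?_ (ContDiff.inv ((contDiff_norm_sq ℝ).add contDiff_const) ?_)
  · exact (EuclideanSpace.proj (𝕜 := ℝ) j : E3 →L[ℝ] ℝ).contDiff
  · intro x; positivity

lemma pd_hardyField {ε : ℝ} (hε : 0 < ε) (j : Fin 3) (x : E3) :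
    pd j (fun y => (hardyField ε j y : ℂ)) x
      = (((‖x‖ ^ 2 + ε)⁻¹ - 2 * x j ^ 2 * ((‖x‖ ^ 2 + ε)⁻¹) ^ 2 : ℝ) : ℂ) := by
  have hne : ‖x‖ ^ 2 + ε ≠ 0 := by positivity
  have h1 : HasFDerivAt (fun y : E3 => y j) (EuclideanSpace.proj (𝕜 := ℝ) j : E3 →L[ℝ] ℝ) x :=
    (EuclideanSpace.proj (𝕜 := ℝ) j : E3 →L[ℝ] ℝ).hasFDerivAt
  have h2 := ((hasFDerivAt_id x).norm_sq.add_const ε)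
  have h3 := (hasDerivAt_inv hne).comp_hasFDerivAt x h2
  have h4 := h1.mul h3
  have h5 := pd_ofReal (a := hardyField ε j) h4 j
  rw [h5]
  congr 1
  simp [EuclideanSpace.inner_single_right]
  ring

/-- Integrating the divergence of `x |u|² / (|x|² + ε)` and using
`∂_j |u|² = 2 Re (i ū (D_j + A_j) u)`: the real potential `A` drops out, so that the magnetic
gradient controls the weighted norm with the constant `4` of the free case. -/
lemma magnetic_hardy {A : Fin 3 → E3 → ℝ} (hA : ∀ j, ContDiff ℝ (⊤ : ℕ∞) (A j))
    {u : E3 → ℂ} (hu : ContDiff ℝ (⊤ : ℕ∞) u) (hc : HasCompactSupport u) {ε : ℝ} (hε : 0 < ε) :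
    ∫ x, (‖x‖ ^ 2 + ε)⁻¹ * ‖u x‖ ^ 2 ≤ 4 * ∫ x, ∑ j, ‖DA A j u x‖ ^ 2 := by
  set w : Fin 3 → E3 → ℂ := fun j x => (hardyField ε j x : ℂ) * (u x * conj (u x)) with hw
  have hws : ∀ j, ContDiff ℝ (⊤ : ℕ∞) (w j) := fun j =>
    (ofReal_contDiff (hardyField_contDiff hε j)).mul (hu.mul (conj_contDiff hu))
  have hwc : ∀ j, HasCompactSupport (w j) := fun j =>
    HasCompactSupport.intro hc fun x hx => by
      simp [hw, image_eq_zero_of_notMem_tsupport hx]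
  have hzero : ∫ x, (∑ j, pd j (w j) x).re = 0 := by
    have h1 : Integrable (fun x => ∑ j, pd j (w j) x) :=
      integrable_finsetSum _ fun j _ => integrable_pd (hws j) (hwc j) j
    have h2 := integral_re h1
    simp only [RCLike.re_eq_complex_re] at h2
    rw [h2, integral_finsetSum _ fun j _ => integrable_pd (hws j) (hwc j) j]
    simp [integral_pd_eq_zero (hws _) (hwc _)]
  have hi1 : Integrable (fun x => (‖x‖ ^ 2 + ε)⁻¹ * ‖u x‖ ^ 2) := by
    refine integrable_of_vanish hc ?_ fun x hx => by simp [image_eq_zero_of_notMem_tsupport hx]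
    refine Continuous.mul (Continuous.inv₀ (by fun_prop) fun x => by positivity)
      (hu.continuous.norm.pow 2)
  have hi2 : Integrable (fun x => ∑ j, ‖DA A j u x‖ ^ 2) := by
    refine integrable_of_vanish hc ?_ fun x hx => by simp [DA_eq_zero hx]
    exact continuous_finsetSum _ fun j _ => (DA_contDiff hA hu j).continuous.norm.pow 2
  have hi3 : Integrable (fun x => (∑ j, pd j (w j) x).re) := by
    have h1 : Integrable (fun x => ∑ j, pd j (w j) x) :=
      integrable_finsetSum _ fun j _ => integrable_pd (hws j) (hwc j) j
    simpa using h1.re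
  have hpt : ∀ x, (‖x‖ ^ 2 + ε)⁻¹ * ‖u x‖ ^ 2
      ≤ 4 * ∑ j, ‖DA A j u x‖ ^ 2 + 2 * (∑ j, pd j (w j) x).re := by
    intro x
    have hpd : ∀ j, (pd j (w j) x).re
        = ((‖x‖ ^ 2 + ε)⁻¹ - 2 * x j ^ 2 * ((‖x‖ ^ 2 + ε)⁻¹) ^ 2) * ‖u x‖ ^ 2
          + hardyField ε j x * (2 * (Complex.I * DA A j u x * conj (u x)).re) := by
      intro j
      have e1 := pd_mul (x := x) (diffAt (ofReal_contDiff (hardyField_contDiff hε j)) x)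
        (diffAt (hu.mul (conj_contDiff hu)) x) j
      have e2 := pd_mul (x := x) (diffAt hu x) (diffAt (conj_contDiff hu) x) j
      simp only [hw]
      rw [e1, e2, pd_conj (diffAt hu x), pd_hardyField hε, ← Complex.normSq_eq_norm_sq]
      generalize (‖x‖ ^ 2 + ε)⁻¹ - 2 * x j ^ 2 * ((‖x‖ ^ 2 + ε)⁻¹) ^ 2 = d
      simp only [DA, Complex.normSq_apply, Complex.add_re, Complex.mul_re, Complex.mul_im,
        Complex.add_im, Complex.ofReal_re, Complex.ofReal_im, Complex.conj_re, Complex.conj_im,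
        Complex.neg_re, Complex.neg_im, Complex.I_re, Complex.I_im]
      ring
    have hq : 0 < (‖x‖ ^ 2 + ε)⁻¹ := by positivity
    have hq1 : ‖x‖ ^ 2 * (‖x‖ ^ 2 + ε)⁻¹ ≤ 1 := by
      rw [← div_eq_mul_inv, div_le_one (by positivity)]; linarith
    have hn : ‖x‖ ^ 2 = x 0 ^ 2 + x 1 ^ 2 + x 2 ^ 2 := by
      simp [EuclideanSpace.norm_sq_eq, Fin.sum_univ_three]
    have hcross : ∀ j, -(hardyField ε j x * (2 * (Complex.I * DA A j u x * conj (u x)).re))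
        ≤ x j ^ 2 * ((‖x‖ ^ 2 + ε)⁻¹) ^ 2 * ‖u x‖ ^ 2 / 2 + 2 * ‖DA A j u x‖ ^ 2 := by
      intro j
      have h1 : |(Complex.I * DA A j u x * conj (u x)).re| ≤ ‖DA A j u x‖ * ‖u x‖ := by
        refine (Complex.abs_re_le_norm _).trans ?_
        simp
      have h2 := neg_abs_le (hardyField ε j x * (Complex.I * DA A j u x * conj (u x)).re)
      rw [abs_mul] at h2
      have h3 := mul_le_mul_of_nonneg_left h1 (abs_nonneg (hardyField ε j x))
      have h4 : |hardyField ε j x| ^ 2 = x j ^ 2 * ((‖x‖ ^ 2 + ε)⁻¹) ^ 2 := by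
        rw [sq_abs, hardyField]; ring
      rw [← h4]
      nlinarith [sq_nonneg (|hardyField ε j x| * ‖u x‖ - 2 * ‖DA A j u x‖)]
    have hc0 := hcross 0
    have hc1 := hcross 1
    have hc2 := hcross 2
    simp only [Fin.sum_univ_three, Complex.add_re, hpd]
    have hq2 : ‖x‖ ^ 2 * ((‖x‖ ^ 2 + ε)⁻¹) ^ 2 * ‖u x‖ ^ 2 ≤ (‖x‖ ^ 2 + ε)⁻¹ * ‖u x‖ ^ 2 := by
      apply mul_le_mul_of_nonneg_right _ (by positivity)
      nlinarith
    generalize (‖x‖ ^ 2 + ε)⁻¹ = q at *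
    rw [hn] at hq2
    linarith
  have := integral_mono hi1 ((hi2.const_mul 4).add (hi3.const_mul 2)) hpt
  simp only [Pi.add_apply] at this
  rw [integral_add (hi2.const_mul 4) (hi3.const_mul 2), integral_const_mul, integral_const_mul,
    hzero] at this
  linarith

/-- A potential of size at most `M / |x|` is controlled by the magnetic gradient. -/
lemma integral_potential_le {A : Fin 3 → E3 → ℝ} (hA : ∀ j, ContDiff ℝ (⊤ : ℕ∞) (A j)) {M : ℝ}
    (hM : ∀ x : E3, x ≠ 0 → ∀ j, |A j x| ≤ M / ‖x‖)
    {u : E3 → ℂ} (hu : ContDiff ℝ (⊤ : ℕ∞) u) (hc : HasCompactSupport u) :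
    ∫ x, (∑ j, A j x ^ 2) * ‖u x‖ ^ 2 ≤ 12 * M ^ 2 * ∫ x, ∑ j, ‖DA A j u x‖ ^ 2 := by
  have hAc : Continuous fun x => ∑ j, A j x ^ 2 :=
    continuous_finsetSum _ fun j _ => (hA j).continuous.pow 2
  have hcont : Continuous fun x => (∑ j, A j x ^ 2) * ‖u x‖ ^ 2 :=
    hAc.mul (hu.continuous.norm.pow 2)
  have hint : Integrable fun x => (∑ j, A j x ^ 2) * ‖u x‖ ^ 2 :=
    integrable_of_vanish hc hcont fun x hx => by simp [image_eq_zero_of_notMem_tsupport hx]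
  have hεpos : ∀ n : ℕ, (0 : ℝ) < 1 / ((n : ℝ) + 1) := fun n => by positivity
  set φ : ℕ → E3 → ℝ := fun n x =>
    (‖x‖ ^ 2 * (‖x‖ ^ 2 + 1 / ((n : ℝ) + 1))⁻¹) * ((∑ j, A j x ^ 2) * ‖u x‖ ^ 2) with hφ
  have hqc : ∀ n : ℕ, Continuous fun x : E3 => (‖x‖ ^ 2 + 1 / ((n : ℝ) + 1))⁻¹ := fun n =>
    Continuous.inv₀ (by fun_prop) fun x => by have := hεpos n; positivity
  have hφc : ∀ n, Continuous (φ n) := fun n =>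
    ((continuous_norm.pow 2).mul (hqc n)).mul hcont
  have hφi : ∀ n, Integrable (φ n) := fun n =>
    integrable_of_vanish hc (hφc n) fun x hx => by
      simp [hφ, image_eq_zero_of_notMem_tsupport hx]
  have hnn : ∀ x, 0 ≤ (∑ j, A j x ^ 2) * ‖u x‖ ^ 2 := fun x => by positivity
  have hlim : Tendsto (fun n => ∫ x, φ n x) atTop
      (𝓝 (∫ x, (∑ j, A j x ^ 2) * ‖u x‖ ^ 2)) := by
    refine tendsto_integral_of_dominated_convergence _
      (fun n => (hφc n).aestronglyMeasurable) hint ?_ ?_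
    · intro n
      refine Eventually.of_forall fun x => ?_
      have h0 := hεpos n
      have h1 : ‖x‖ ^ 2 * (‖x‖ ^ 2 + 1 / ((n : ℝ) + 1))⁻¹ ≤ 1 := by
        rw [← div_eq_mul_inv, div_le_one (by positivity)]; linarith
      rw [Real.norm_of_nonneg (mul_nonneg (by positivity) (hnn x))]
      exact mul_le_of_le_one_left (hnn x) h1
    · have hae : ∀ᵐ x : E3, x ≠ 0 := by
        simp [ae_iff]
      filter_upwards [hae] with x hx
      have hx2 : ‖x‖ ^ 2 ≠ 0 := by simpa using hx
      have h1 : Tendsto (fun n : ℕ => ‖x‖ ^ 2 + 1 / ((n : ℝ) + 1)) atTop (𝓝 (‖x‖ ^ 2 + 0)) :=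
        tendsto_const_nhds.add tendsto_one_div_add_atTop_nhds_zero_nat
      rw [add_zero] at h1
      have h2 := ((h1.inv₀ hx2).const_mul (‖x‖ ^ 2)).mul_const ((∑ j, A j x ^ 2) * ‖u x‖ ^ 2)
      rw [mul_inv_cancel₀ hx2, one_mul] at h2
      exact h2
  refine le_of_tendsto hlim (Eventually.of_forall fun n => ?_)
  have hH := magnetic_hardy hA hu hc (hεpos n)
  have hbd : ∀ x, φ n x ≤ 3 * M ^ 2 * ((‖x‖ ^ 2 + 1 / ((n : ℝ) + 1))⁻¹ * ‖u x‖ ^ 2) := by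
    intro x
    have h1 : ‖x‖ ^ 2 * ∑ j, A j x ^ 2 ≤ 3 * M ^ 2 := by
      by_cases hx : x = 0
      · simp [hx]; positivity
      · have hxn : 0 < ‖x‖ := norm_pos_iff.2 hx
        have h2 : ∀ j, ‖x‖ ^ 2 * A j x ^ 2 ≤ M ^ 2 := fun j => by
          have h3 := hM x hx j
          rw [le_div_iff₀ hxn] at h3
          have h4 := pow_le_pow_left₀ (by positivity) h3 2
          rw [mul_pow, sq_abs] at h4
          linarith
        rw [Fin.sum_univ_three]
        linarith [h2 0, h2 1, h2 2]
    have h0 := hεpos n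
    have h5 : 0 ≤ (‖x‖ ^ 2 + 1 / ((n : ℝ) + 1))⁻¹ * ‖u x‖ ^ 2 := by positivity
    have h6 := mul_le_mul_of_nonneg_right h1 h5
    simp only [hφ]
    linarith
  have hi1 : Integrable fun x => (‖x‖ ^ 2 + 1 / ((n : ℝ) + 1))⁻¹ * ‖u x‖ ^ 2 :=
    integrable_of_vanish hc ((hqc n).mul (hu.continuous.norm.pow 2)) fun x hx => by
      simp [image_eq_zero_of_notMem_tsupport hx]
  have h7 := integral_mono (hφi n) (hi1.const_mul _) hbd
  rw [integral_const_mul] at h7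
  have h8 := mul_le_mul_of_nonneg_left hH (show 0 ≤ 3 * M ^ 2 by positivity)
  linarith

/-- The magnetic gradient controls the free one. -/
lemma integral_grad_le {A : Fin 3 → E3 → ℝ} (hA : ∀ j, ContDiff ℝ (⊤ : ℕ∞) (A j)) {M : ℝ}
    (hM : ∀ x : E3, x ≠ 0 → ∀ j, |A j x| ≤ M / ‖x‖)
    {u : E3 → ℂ} (hu : ContDiff ℝ (⊤ : ℕ∞) u) (hc : HasCompactSupport u) :
    ∫ x, ∑ j, ‖pd j u x‖ ^ 2 ≤ (2 + 24 * M ^ 2) * ∫ x, ∑ j, ‖DA A j u x‖ ^ 2 := by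
  have hi0 : Integrable fun x => ∑ j, ‖pd j u x‖ ^ 2 := by
    refine integrable_of_vanish hc ?_ fun x hx => by simp [pd_eq_zero hx]
    exact continuous_finsetSum _ fun j _ => (pd_contDiff hu j).continuous.norm.pow 2
  have hi1 : Integrable fun x => (∑ j, A j x ^ 2) * ‖u x‖ ^ 2 :=
    integrable_of_vanish hc
      ((continuous_finsetSum _ fun j _ => (hA j).continuous.pow 2).mul
        (hu.continuous.norm.pow 2)) fun x hx => by simp [image_eq_zero_of_notMem_tsupport hx]
  have hi2 : Integrable (fun x => ∑ j, ‖DA A j u x‖ ^ 2) := by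
    refine integrable_of_vanish hc ?_ fun x hx => by simp [DA_eq_zero hx]
    exact continuous_finsetSum _ fun j _ => (DA_contDiff hA hu j).continuous.norm.pow 2
  have hpt : ∀ x, ∑ j, ‖pd j u x‖ ^ 2
      ≤ 2 * ∑ j, ‖DA A j u x‖ ^ 2 + 2 * ((∑ j, A j x ^ 2) * ‖u x‖ ^ 2) := by
    intro x
    rw [Finset.mul_sum, Finset.sum_mul, Finset.mul_sum, ← Finset.sum_add_distrib]
    refine Finset.sum_le_sum fun j _ => ?_
    have h1 : ‖pd j u x‖ ≤ ‖DA A j u x‖ + |A j x| * ‖u x‖ := by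
      have e : -Complex.I * pd j u x = DA A j u x - (A j x : ℂ) * u x := by simp [DA]
      have h2 := norm_sub_le (DA A j u x) ((A j x : ℂ) * u x)
      rw [← e] at h2
      simpa using h2
    have h3 := pow_le_pow_left₀ (norm_nonneg _) h1 2
    have h4 : A j x ^ 2 * ‖u x‖ ^ 2 = (|A j x| * ‖u x‖) ^ 2 := by rw [mul_pow, sq_abs]
    rw [h4]
    nlinarith [sq_nonneg (‖DA A j u x‖ - |A j x| * ‖u x‖)]
  have h := integral_mono hi0 ((hi2.const_mul 2).add (hi1.const_mul 2)) hpt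
  simp only [Pi.add_apply] at h
  rw [integral_add (hi2.const_mul 2) (hi1.const_mul 2), integral_const_mul,
    integral_const_mul] at h
  linarith [integral_potential_le hA hM hu hc]

/-! ### The dual norm -/

lemma gradL2_sq (u : E3 → ℂ) : gradL2 u ^ 2 = ∫ x, ∑ j, ‖pd j u x‖ ^ 2 :=
  Real.sq_sqrt (integral_nonneg fun x => by positivity)

lemma gradL2_nonneg (u : E3 → ℂ) : 0 ≤ gradL2 u := Real.sqrt_nonneg _

/-- By Hardy's inequality a continuous compactly supported function pairs boundedly with the unit
ball of the Dirichlet norm, so the supremum defining `negSob` is a genuine one. -/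
lemma bddAbove_negSob {f : E3 → ℂ} (hf : Continuous f) (hfc : HasCompactSupport f) :
    BddAbove {r : ℝ | ∃ v : E3 → ℂ, ContDiff ℝ (⊤ : ℕ∞) v ∧ HasCompactSupport v ∧
      gradL2 v ≤ 1 ∧ r = ‖∫ x : E3, f x * (starRingEnd ℂ) (v x)‖} := by
  refine ⟨(∫ x, (‖x‖ ^ 2 + 1) * ‖f x‖ ^ 2) / 2 + 2, ?_⟩
  rintro r ⟨v, hv, hvc, hv1, rfl⟩
  have hH := magnetic_hardy (A := fun _ _ => 0) (fun _ => contDiff_const) hv hvc one_pos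
  have hDA : ∀ x, ∑ j, ‖DA (fun _ _ => 0) j v x‖ ^ 2 = ∑ j, ‖pd j v x‖ ^ 2 := by
    intro x; simp [DA]
  simp only [hDA] at hH
  rw [← gradL2_sq] at hH
  have hg1 : gradL2 v ^ 2 ≤ 1 := pow_le_one₀ (gradL2_nonneg v) hv1
  have hi1 : Integrable fun x => (‖x‖ ^ 2 + 1) * ‖f x‖ ^ 2 :=
    integrable_of_vanish hfc (by fun_prop) fun x hx => by
      simp [image_eq_zero_of_notMem_tsupport hx]
  have hi2 : Integrable fun x => (‖x‖ ^ 2 + 1)⁻¹ * ‖v x‖ ^ 2 := by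
    refine integrable_of_vanish hvc ?_ fun x hx => by simp [image_eq_zero_of_notMem_tsupport hx]
    exact Continuous.mul (Continuous.inv₀ (by fun_prop) fun x => by positivity)
      (hv.continuous.norm.pow 2)
  have hi3 : Integrable fun x => ‖f x * conj (v x)‖ :=
    integrable_of_vanish hvc (hf.mul (conj_contDiff hv).continuous).norm fun x hx => by
      simp [image_eq_zero_of_notMem_tsupport hx]
  have hpt : ∀ x, ‖f x * conj (v x)‖
      ≤ 1 / 2 * ((‖x‖ ^ 2 + 1) * ‖f x‖ ^ 2) + 1 / 2 * ((‖x‖ ^ 2 + 1)⁻¹ * ‖v x‖ ^ 2) := by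
    intro x
    have hp : 0 < ‖x‖ ^ 2 + 1 := by positivity
    rw [norm_mul, RCLike.norm_conj]
    have h1 : (‖x‖ ^ 2 + 1)⁻¹ * ((‖x‖ ^ 2 + 1) * ‖f x‖ - ‖v x‖) ^ 2
        = (‖x‖ ^ 2 + 1) * ‖f x‖ ^ 2 - 2 * (‖f x‖ * ‖v x‖) + (‖x‖ ^ 2 + 1)⁻¹ * ‖v x‖ ^ 2 := by
      field_simp
      ring
    have h2 : 0 ≤ (‖x‖ ^ 2 + 1)⁻¹ * ((‖x‖ ^ 2 + 1) * ‖f x‖ - ‖v x‖) ^ 2 := by positivity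
    linarith
  have h := integral_mono hi3 ((hi1.const_mul (1 / 2)).add (hi2.const_mul (1 / 2))) hpt
  simp only [Pi.add_apply] at h
  rw [integral_add (hi1.const_mul _) (hi2.const_mul _), integral_const_mul,
    integral_const_mul] at h
  have h0 := norm_integral_le_integral_norm (μ := (volume : Measure E3))
    (fun x => f x * conj (v x))
  linarith

lemma negSob_nonneg (f : E3 → ℂ) : 0 ≤ negSob f := by
  refine Real.sSup_nonneg ?_
  rintro r ⟨v, -, -, -, rfl⟩
  exact norm_nonneg _

lemma pairing_le {f : E3 → ℂ} (hf : Continuous f) (hfc : HasCompactSupport f)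
    {u : E3 → ℂ} (hu : ContDiff ℝ (⊤ : ℕ∞) u) (hc : HasCompactSupport u) (h0 : 0 < gradL2 u) :
    ‖∫ x, f x * conj (u x)‖ ≤ negSob f * gradL2 u := by
  set c : ℝ := (gradL2 u)⁻¹ with hcdef
  have hc0 : 0 < c := inv_pos.2 h0
  have hv : ContDiff ℝ (⊤ : ℕ∞) (fun x => (c : ℂ) * u x) := contDiff_const.mul hu
  have hpd : ∀ j x, pd j (fun x => (c : ℂ) * u x) x = c * pd j u x := by
    intro j x
    rw [pd_mul (differentiableAt_const _) (diffAt hu x)]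
    simp [pd]
  have hg : gradL2 (fun x => (c : ℂ) * u x) ^ 2 = 1 := by
    rw [gradL2_sq]
    simp only [hpd, norm_mul, mul_pow, Complex.norm_real, Real.norm_eq_abs, sq_abs]
    simp only [← Finset.mul_sum]
    rw [integral_const_mul, ← gradL2_sq, hcdef]
    field_simp
  have hle : ‖∫ x, f x * conj ((c : ℂ) * u x)‖ ≤ negSob f := by
    refine le_csSup (bddAbove_negSob hf hfc) ⟨_, hv, ?_, ?_, rfl⟩
    · exact HasCompactSupport.intro hc fun x hx => by
        simp [image_eq_zero_of_notMem_tsupport hx]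
    · nlinarith [gradL2_nonneg (fun x => (c : ℂ) * u x)]
  have he : ∫ x, f x * conj ((c : ℂ) * u x) = c * ∫ x, f x * conj (u x) := by
    rw [← integral_const_mul]
    congr 1
    ext x
    simp
    ring
  rw [he, norm_mul, Complex.norm_real, Real.norm_of_nonneg hc0.le, hcdef,
    inv_mul_le_iff₀ h0] at hle
  linarith

/-! ### The energy identity -/

lemma P0op_contDiff {g : Fin 3 → Fin 3 → E3 → ℝ} {g0 : Fin 3 → E3 → ℝ} {g00 V A0 : E3 → ℝ}
    {A : Fin 3 → E3 → ℝ} (hg : ∀ j k, ContDiff ℝ (⊤ : ℕ∞) (g j k))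
    (hg0 : ∀ k, ContDiff ℝ (⊤ : ℕ∞) (g0 k)) (hg00 : ContDiff ℝ (⊤ : ℕ∞) g00)
    (hV : ContDiff ℝ (⊤ : ℕ∞) V) (hA0 : ContDiff ℝ (⊤ : ℕ∞) A0)
    (hA : ∀ j, ContDiff ℝ (⊤ : ℕ∞) (A j)) {u : E3 → ℂ} (hu : ContDiff ℝ (⊤ : ℕ∞) u) :
    ContDiff ℝ (⊤ : ℕ∞) (P0op g g0 g00 V A0 A u) := by
  unfold P0op
  refine ContDiff.add (ContDiff.add (ContDiff.add ?_ ?_) ?_) ?_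
  · exact ContDiff.sum fun j _ => DA_contDiff hA
      (ContDiff.sum fun k _ => (ofReal_contDiff (hg j k)).mul (DA_contDiff hA hu k)) j
  · exact (ofReal_contDiff hA0).mul
      (ContDiff.sum fun k _ => (ofReal_contDiff (hg0 k)).mul (DA_contDiff hA hu k))
  · exact ContDiff.sum fun k _ => DA_contDiff hA
      ((ofReal_contDiff (hA0.mul (hg0 k))).mul hu) k
  · exact (ofReal_contDiff ((hg00.mul (hA0.pow 2)).add hV)).mul hu

lemma P0op_eq_zero {g : Fin 3 → Fin 3 → E3 → ℝ} {g0 : Fin 3 → E3 → ℝ} {g00 V A0 : E3 → ℝ}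
    {A : Fin 3 → E3 → ℝ} {u : E3 → ℂ} {x : E3} (hx : x ∉ tsupport u) :
    P0op g g0 g00 V A0 A u x = 0 := by
  have h : ∀ (F : E3 → ℂ), (∀ y, y ∉ tsupport u → F y = 0) → ∀ j, DA A j F x = 0 := by
    intro F hF j
    refine DA_eq_zero (fun hxF => hx ?_) j
    refine closure_minimal (fun y hy => ?_) (isClosed_tsupport u) hxF
    by_contra hyu
    exact hy (hF y hyu)
  unfold P0op
  rw [Finset.sum_eq_zero fun j _ => h _ (fun y hy => by simp [DA_eq_zero hy]) j,
    Finset.sum_eq_zero (s := Finset.univ) (f := fun k =>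
      DA A k (fun y => ((A0 y * g0 k y : ℝ) : ℂ) * u y) x) fun k _ =>
        h _ (fun y hy => by simp [image_eq_zero_of_notMem_tsupport hy]) k]
  simp [DA_eq_zero hx, image_eq_zero_of_notMem_tsupport hx]

/-- Pairing `P₀ u` with `u` and integrating by parts; the first- and zeroth-order terms add up to
`𝒬(u,u)`. -/
lemma energy_identity {g : Fin 3 → Fin 3 → E3 → ℝ} {g0 : Fin 3 → E3 → ℝ} {g00 V A0 : E3 → ℝ}
    {A : Fin 3 → E3 → ℝ} (hg : ∀ j k, ContDiff ℝ (⊤ : ℕ∞) (g j k))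
    (hg0 : ∀ k, ContDiff ℝ (⊤ : ℕ∞) (g0 k)) (hg00 : ContDiff ℝ (⊤ : ℕ∞) g00)
    (hV : ContDiff ℝ (⊤ : ℕ∞) V) (hA0 : ContDiff ℝ (⊤ : ℕ∞) A0)
    (hA : ∀ j, ContDiff ℝ (⊤ : ℕ∞) (A j)) (hsym : ∀ j k x, g j k x = g k j x)
    {u : E3 → ℂ} (hu : ContDiff ℝ (⊤ : ℕ∞) u) (hc : HasCompactSupport u) :
    (∫ x, P0op g g0 g00 V A0 A u x * conj (u x)).re
      = (∫ x, DAsq g A u x) + ∫ x, Qform g0 g00 V A0 A u x := by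
  set F : Fin 3 → E3 → ℂ := fun j y => ∑ k, (g j k y : ℂ) * DA A k u y with hF
  set G : Fin 3 → E3 → ℂ := fun k y => ((A0 y * g0 k y : ℝ) : ℂ) * u y with hG
  set H : Fin 3 → E3 → ℂ := fun j y => (F j y + G j y) * conj (u y) with hHdef
  have hFs : ∀ j, ContDiff ℝ (⊤ : ℕ∞) (F j) := fun j =>
    ContDiff.sum fun k _ => (ofReal_contDiff (hg j k)).mul (DA_contDiff hA hu k)
  have hGs : ∀ j, ContDiff ℝ (⊤ : ℕ∞) (G j) := fun j =>
    (ofReal_contDiff (hA0.mul (hg0 j))).mul hu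
  have hHs : ∀ j, ContDiff ℝ (⊤ : ℕ∞) (H j) := fun j =>
    ((hFs j).add (hGs j)).mul (conj_contDiff hu)
  have hHc : ∀ j, HasCompactSupport (H j) := fun j =>
    HasCompactSupport.intro hc fun x hx => by
      simp [hHdef, image_eq_zero_of_notMem_tsupport hx]
  have hDc := fun j => (DA_contDiff hA hu j).continuous
  have hi1 : Integrable (DAsq g A u) := by
    refine integrable_of_vanish hc ?_ fun x hx => by simp [DAsq, DA_eq_zero hx]
    refine Complex.continuous_re.comp (continuous_finsetSum _ fun j _ =>
      continuous_finsetSum _ fun k _ => ?_)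
    exact ((ofReal_contDiff (hg j k)).continuous.mul (hDc j)).mul
      (conj_contDiff (DA_contDiff hA hu k)).continuous
  have hi2 : Integrable (Qform g0 g00 V A0 A u) := by
    refine integrable_of_vanish hc ?_ fun x hx => by
      simp [Qform, image_eq_zero_of_notMem_tsupport hx]
    refine Continuous.add ((continuous_const.mul hA0.continuous).mul
      (continuous_finsetSum _ fun i _ => (hg0 i).continuous.mul (Complex.continuous_re.comp
        (hu.continuous.mul (conj_contDiff (DA_contDiff hA hu i)).continuous)))) ?_
    exact ((hg00.continuous.mul (hA0.continuous.pow 2)).add hV.continuous).mul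
      (hu.continuous.norm.pow 2)
  have hi3 : Integrable fun x => P0op g g0 g00 V A0 A u x * conj (u x) :=
    integrable_of_vanish hc ((P0op_contDiff hg hg0 hg00 hV hA0 hA hu).continuous.mul
      (conj_contDiff hu).continuous) fun x hx => by simp [image_eq_zero_of_notMem_tsupport hx]
  have hi4 : Integrable fun x => ∑ j, -Complex.I * pd j (H j) x :=
    integrable_finsetSum _ fun j _ => (integrable_pd (hHs j) (hHc j) j).const_mul _
  have hzero : ∫ x, (∑ j, -Complex.I * pd j (H j) x).re = 0 := by
    have h2 := integral_re hi4
    simp only [RCLike.re_eq_complex_re] at h2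
    rw [h2, integral_finsetSum _ fun j _ => (integrable_pd (hHs j) (hHc j) j).const_mul _]
    simp only [integral_const_mul, integral_pd_eq_zero (hHs _) (hHc _)]
    simp
  have hpt : ∀ x, (P0op g g0 g00 V A0 A u x * conj (u x)).re
      = (DAsq g A u x + Qform g0 g00 V A0 A u x) + (∑ j, -Complex.I * pd j (H j) x).re := by
    intro x
    -- `(D_j + A_j) K ū` is `K conj((D_j + A_j) u)` up to a derivative, for any function `K`.
    have hpd : ∀ j, -Complex.I * pd j (H j) x
        = DA A j (F j) x * conj (u x) + DA A j (G j) x * conj (u x)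
          - F j x * conj (DA A j u x) - G j x * conj (DA A j u x) := by
      intro j
      have e1 := pd_mul (x := x) (diffAt ((hFs j).add (hGs j)) x) (diffAt (conj_contDiff hu) x) j
      have e2 := pd_add (x := x) (diffAt (hFs j) x) (diffAt (hGs j) x) j
      simp only [hHdef]
      rw [e1, e2, pd_conj (diffAt hu x)]
      simp [DA]
      ring
    have hP : P0op g g0 g00 V A0 A u x = (∑ j, DA A j (F j) x)
        + (A0 x : ℂ) * ∑ k, (g0 k x : ℂ) * DA A k u x
        + (∑ k, DA A k (G k) x) + ((g00 x * (A0 x) ^ 2 + V x : ℝ) : ℂ) * u x := rfl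
    have hS : P0op g g0 g00 V A0 A u x * conj (u x) - ∑ j, -Complex.I * pd j (H j) x
        = ∑ j, F j x * conj (DA A j u x) + ∑ j, G j x * conj (DA A j u x)
          + ((A0 x : ℂ) * ∑ k, (g0 k x : ℂ) * DA A k u x) * conj (u x)
          + ((g00 x * (A0 x) ^ 2 + V x : ℝ) : ℂ) * u x * conj (u x) := by
      rw [hP]
      simp only [hpd, Fin.sum_univ_three]
      ring
    have hR := congrArg Complex.re hS
    rw [Complex.sub_re] at hR
    have hfin : (∑ j, F j x * conj (DA A j u x) + ∑ j, G j x * conj (DA A j u x)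
          + ((A0 x : ℂ) * ∑ k, (g0 k x : ℂ) * DA A k u x) * conj (u x)
          + ((g00 x * (A0 x) ^ 2 + V x : ℝ) : ℂ) * u x * conj (u x)).re
        = DAsq g A u x + Qform g0 g00 V A0 A u x := by
      simp only [hF, hG, DAsq, Qform, Fin.sum_univ_three]
      rw [hsym 1 0 x, hsym 2 0 x, hsym 2 1 x, ← Complex.normSq_eq_norm_sq, Complex.normSq_apply]
      generalize DA A 0 u x = d0
      generalize DA A 1 u x = d1
      generalize DA A 2 u x = d2
      simp only [Complex.add_re, Complex.mul_re, Complex.ofReal_re, Complex.ofReal_im,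
        Complex.add_im, Complex.mul_im, Complex.conj_re, Complex.conj_im]
      ring
    linarith
  have h2 := integral_re hi3
  simp only [RCLike.re_eq_complex_re] at h2
  rw [← h2]
  simp only [hpt]
  have hi5 : Integrable fun x => DAsq g A u x + Qform g0 g00 V A0 A u x := hi1.add hi2
  rw [integral_add hi5 (by simpa using hi4.re), hzero, add_zero]
  exact integral_add hi1 hi2

/-- Ellipticity on complex vectors, from the real form applied to real and imaginary parts. -/
lemma DAsq_ge {lam : ℝ} {g : Fin 3 → Fin 3 → E3 → ℝ} {A : Fin 3 → E3 → ℝ}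
    (hell : ∀ (x ξ : E3), lam * ‖ξ‖ ^ 2 ≤ ∑ j, ∑ k, g j k x * ξ j * ξ k) (u : E3 → ℂ) (x : E3) :
    lam * ∑ j, ‖DA A j u x‖ ^ 2 ≤ DAsq g A u x := by
  have h1 := hell x (WithLp.toLp 2 fun j => (DA A j u x).re)
  have h2 := hell x (WithLp.toLp 2 fun j => (DA A j u x).im)
  simp only [EuclideanSpace.norm_sq_eq, Fin.sum_univ_three, Real.norm_eq_abs, sq_abs] at h1 h2
  simp only [DAsq, Fin.sum_univ_three, ← Complex.normSq_eq_norm_sq, Complex.normSq_apply,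
    Complex.add_re, Complex.mul_re, Complex.mul_im, Complex.ofReal_re, Complex.ofReal_im,
    Complex.conj_re, Complex.conj_im]
  linarith

/-- **Zero resolvent bound for sufficiently non-negative potentials.**
If `−∫ 𝒬(u,u) ≤ λ₀ ∫ |D_A u|²` with `λ₀ < 1`, then the zero nonresonance bound
`‖∇u‖_{L²} ≤ C (1 − λ₀)⁻¹ ‖P₀ u‖_{Ḣ⁻¹}` holds, with `C = C(λ, Λ, M)`. -/
theorem zero_resolvent_bound_of_nonneg_potential
    (lam Lam M : ℝ) (hlam : 0 < lam) (hlamLam : lam ≤ Lam) :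
    ∃ C : ℝ, 0 < C ∧
      ∀ (g : Fin 3 → Fin 3 → E3 → ℝ) (g0 : Fin 3 → E3 → ℝ) (g00 V A0 : E3 → ℝ)
        (A : Fin 3 → E3 → ℝ),
        (∀ j k, ContDiff ℝ (⊤ : ℕ∞) (g j k)) →
        (∀ k, ContDiff ℝ (⊤ : ℕ∞) (g0 k)) →
        ContDiff ℝ (⊤ : ℕ∞) g00 → ContDiff ℝ (⊤ : ℕ∞) V → ContDiff ℝ (⊤ : ℕ∞) A0 →
        (∀ j, ContDiff ℝ (⊤ : ℕ∞) (A j)) →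
        (∀ j k x, g j k x = g k j x) →
        (∀ (x ξ : E3),
          lam * ‖ξ‖ ^ 2 ≤ ∑ j, ∑ k, g j k x * ξ j * ξ k ∧
          ∑ j, ∑ k, g j k x * ξ j * ξ k ≤ Lam * ‖ξ‖ ^ 2) →
        (∃ Cb : ℝ, ∀ x, |g00 x| ≤ Cb ∧ |V x| ≤ Cb ∧ ∀ k, |g0 k x| ≤ Cb) →
        (∀ x : E3, x ≠ 0 → |A0 x| ≤ M / ‖x‖ ∧ ∀ j, |A j x| ≤ M / ‖x‖) →
        ∀ lam0 : ℝ, 0 ≤ lam0 → lam0 < 1 →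
        (∀ u : E3 → ℂ, ContDiff ℝ (⊤ : ℕ∞) u → HasCompactSupport u →
          -(∫ x : E3, Qform g0 g00 V A0 A u x) ≤ lam0 * ∫ x : E3, DAsq g A u x) →
        ∀ u : E3 → ℂ, ContDiff ℝ (⊤ : ℕ∞) u → HasCompactSupport u →
          gradL2 u ≤ C * (1 - lam0)⁻¹ * negSob (P0op g g0 g00 V A0 A u) := by
  refine ⟨(2 + 24 * M ^ 2) / lam, by positivity, ?_⟩
  intro g g0 g00 V A0 A hg hg0 hg00 hV hA0 hA hsym hell _ hM lam0 _ hl1 hQ u hu hc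
  have hpos : 0 < 1 - lam0 := by linarith
  have hN := negSob_nonneg (P0op g g0 g00 V A0 A u)
  rcases (gradL2_nonneg u).eq_or_lt with h0 | h0
  · rw [← h0]; positivity
  have hPs := P0op_contDiff hg hg0 hg00 hV hA0 hA hu
  have hPc : HasCompactSupport (P0op g g0 g00 V A0 A u) :=
    HasCompactSupport.intro hc fun x hx => P0op_eq_zero hx
  have hpair := pairing_le hPs.continuous hPc hu hc h0
  have hen := energy_identity hg hg0 hg00 hV hA0 hA hsym hu hc
  have hre := Complex.re_le_norm (∫ x, P0op g g0 g00 V A0 A u x * conj (u x))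
  have hgrad := integral_grad_le hA (fun x hx j => (hM x hx).2 j) hu hc
  rw [← gradL2_sq] at hgrad
  have hi1 : Integrable (DAsq g A u) := by
    refine integrable_of_vanish hc ?_ fun x hx => by simp [DAsq, DA_eq_zero hx]
    refine Complex.continuous_re.comp (continuous_finsetSum _ fun j _ =>
      continuous_finsetSum _ fun k _ => ?_)
    exact ((ofReal_contDiff (hg j k)).continuous.mul (DA_contDiff hA hu j).continuous).mul
      (conj_contDiff (DA_contDiff hA hu k)).continuous
  have hi2 : Integrable (fun x => ∑ j, ‖DA A j u x‖ ^ 2) := by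
    refine integrable_of_vanish hc ?_ fun x hx => by simp [DA_eq_zero hx]
    exact continuous_finsetSum _ fun j _ => (DA_contDiff hA hu j).continuous.norm.pow 2
  have hlow := integral_mono (hi2.const_mul lam) hi1
    (DAsq_ge (A := A) (fun x ξ => (hell x ξ).1) u)
  rw [integral_const_mul] at hlow
  have hQu := hQ u hu hc
  have hmain : (1 - lam0) * ∫ x, DAsq g A u x
      ≤ negSob (P0op g g0 g00 V A0 A u) * gradL2 u := by linarith
  have hD : ∫ x, ∑ j, ‖DA A j u x‖ ^ 2
      ≤ lam⁻¹ * ((1 - lam0)⁻¹ * (negSob (P0op g g0 g00 V A0 A u) * gradL2 u)) := by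
    rw [← div_eq_inv_mul, le_div_iff₀ hlam, ← div_eq_inv_mul, le_div_iff₀ hpos]
    nlinarith
  have hfin : gradL2 u * gradL2 u ≤ ((2 + 24 * M ^ 2) / lam * (1 - lam0)⁻¹
      * negSob (P0op g g0 g00 V A0 A u)) * gradL2 u := by
    have h := mul_le_mul_of_nonneg_left hD (show 0 ≤ 2 + 24 * M ^ 2 by positivity)
    calc gradL2 u * gradL2 u = gradL2 u ^ 2 := by ring
      _ ≤ _ := hgrad
      _ ≤ _ := h
      _ = _ := by ring
  exact le_of_mul_le_mul_right hfin h0
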